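/- arXiv:2510.15574 — 5 statements merged into one kernel-verified Lean document; each statement's English description precedes it below -/
import Mathlib

section
/- In the abstract discrete Kirchhoff setting, there exists at least one u ∈ V such that M(‖G u‖²) a(u, v) = ⟨f(j u), j v⟩ for all v ∈ V. -/
/-!
No topological fixed-point theorem is needed. The right-hand side is `⟪T u, v⟫` with `T` Lipschitz of
constant `κ / λ < m0` (Riesz representation), so for every frozen coefficient `m ≥ m0` the
equation `m u = T u` is uniquely solvable by the contraction principle (`exists_smul_eq`), and its
solution is bounded and depends continuously on `m` (`norm_sub_le_of_smul_eq`). What is left is the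
scalar equation `s = ‖G u(M s)‖²`, where `u(m)` is the solution for the coefficient `m`; the
intermediate value theorem solves it because the right-hand side is nonnegative and bounded
(`exists_nonlocal_smul_eq`).
-/

open RealInnerProductSpace

section Nonlocal

variable {V : Type*} [NormedAddCommGroup V] [NormedSpace ℝ V]

lemma exists_smul_eq [CompleteSpace V] {T : V → V} {L m : ℝ} (hL : 0 ≤ L)
    (hT : ∀ x y, ‖T x - T y‖ ≤ L * ‖x - y‖) (hm : L < m) : ∃ u, m • u = T u := by
  have hm' : 0 < m := hL.trans_lt hm
  have hc : ContractingWith (L / m).toNNReal (fun u => m⁻¹ • T u) := by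
    refine ⟨?_, LipschitzWith.of_dist_le_mul fun x y => ?_⟩
    · rw [← NNReal.coe_lt_coe, Real.coe_toNNReal _ (by positivity), NNReal.coe_one]
      exact (div_lt_one hm').2 hm
    · rw [Real.coe_toNNReal _ (by positivity), dist_eq_norm, dist_eq_norm, ← smul_sub, norm_smul,
        Real.norm_of_nonneg (by positivity)]
      calc m⁻¹ * ‖T x - T y‖ ≤ m⁻¹ * (L * ‖x - y‖) := by gcongr; exact hT x y
        _ = L / m * ‖x - y‖ := by ring
  refine ⟨ContractingWith.fixedPoint _ hc, ?_⟩
  have h : m⁻¹ • T _ = _ := hc.fixedPoint_isFixedPt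
  nth_rewrite 1 [← h]
  rw [smul_inv_smul₀ hm'.ne']

/-- Stability of the solution of `m • u = T u` with respect to the coefficient `m`. -/
lemma norm_sub_le_of_smul_eq {T : V → V} {L m0 m n : ℝ}
    (hT : ∀ x y, ‖T x - T y‖ ≤ L * ‖x - y‖) (hm0 : 0 < m0) (hm : m0 ≤ m) {u w : V}
    (hu : m • u = T u) (hw : n • w = T w) :
    (m0 - L) * ‖u - w‖ ≤ |m - n| * ‖w‖ := by
  have h : m • (u - w) = (T u - T w) - (m - n) • w := by
    rw [← hu, ← hw]; module
  have h1 := congrArg norm h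
  rw [norm_smul, Real.norm_of_nonneg (hm0.le.trans hm)] at h1
  have h2 := norm_sub_le (T u - T w) ((m - n) • w)
  rw [norm_smul, Real.norm_eq_abs] at h2
  have h3 := hT u w
  have h4 := mul_le_mul_of_nonneg_right hm (norm_nonneg (u - w))
  linarith

/-- Solvability of an equation whose coefficient depends on the unknown only through a scalar
`Φ u`, with `Φ` continuous, nonnegative and controlled by the norm. -/
lemma exists_nonlocal_smul_eq [CompleteSpace V] {T : V → V} {L m0 : ℝ} (hL : 0 ≤ L)
    (hT : ∀ x y, ‖T x - T y‖ ≤ L * ‖x - y‖) (hm0 : L < m0)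
    {M : ℝ → ℝ} (hM : Continuous M) (hMge : ∀ s : ℝ, 0 ≤ s → m0 ≤ M s)
    {Φ : V → ℝ} (hΦ : Continuous Φ) (hΦ0 : ∀ u, 0 ≤ Φ u) (hΦle : ∀ u, Φ u ≤ ‖u‖ ^ 2) :
    ∃ u, M (Φ u) • u = T u := by
  have hpos : 0 < m0 := hL.trans_lt hm0
  have hδ : 0 < m0 - L := sub_pos.2 hm0
  -- `|s|` makes the family of solutions defined on all of `ℝ`.
  have hge : ∀ s : ℝ, m0 ≤ M |s| := fun s => hMge _ (abs_nonneg s)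
  choose u hu using fun s : ℝ => exists_smul_eq hL hT (hm0.trans_le (hge s))
  have hcont : Continuous u := by
    rw [continuous_iff_continuousAt]
    intro t
    rw [ContinuousAt, tendsto_iff_norm_sub_tendsto_zero]
    have hlim : Filter.Tendsto (fun s => |M (|s|) - M (|t|)| * ‖u t‖ / (m0 - L)) (nhds t)
        (nhds 0) := by
      have : Continuous (fun s => |M (|s|) - M (|t|)| * ‖u t‖ / (m0 - L)) := by fun_prop
      simpa using this.tendsto t
    refine squeeze_zero (fun _ => norm_nonneg _) (fun s => ?_) hlim
    rw [le_div_iff₀ hδ, mul_comm]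
    exact norm_sub_le_of_smul_eq hT hpos (hge s) (hu s) (hu t)
  set C : ℝ := ‖T 0‖ / (m0 - L) with hC
  have hbound : ∀ s, ‖u s‖ ≤ C := by
    intro s
    rw [hC, le_div_iff₀ hδ]
    have h1 := congrArg norm (hu s)
    rw [norm_smul, Real.norm_of_nonneg (hpos.le.trans (hge s))] at h1
    have h2 := norm_le_norm_add_norm_sub' (T (u s)) (T 0)
    have h3 := hT (u s) 0
    rw [sub_zero] at h3
    have h4 := mul_le_mul_of_nonneg_right (hge s) (norm_nonneg (u s))
    linarith
  have hB : ∀ s, Φ (u s) ≤ C ^ 2 := fun s =>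
    (hΦle _).trans (pow_le_pow_left₀ (norm_nonneg _) (hbound s) 2)
  have hg : Continuous fun s => s - Φ (u s) := by fun_prop
  obtain ⟨s, hs, hs0⟩ := intermediate_value_Icc (sq_nonneg C) hg.continuousOn
    (show (0 : ℝ) ∈ _ from ⟨by simpa using hΦ0 (u 0), by simpa using hB (C ^ 2)⟩)
  refine ⟨u s, ?_⟩
  have hsΦ : Φ (u s) = s := (sub_eq_zero.1 hs0).symm
  rw [hsΦ]
  simpa [abs_of_nonneg hs.1] using hu s

end Nonlocal

/-- Existence of a solution to the abstract discrete Kirchhoff problem: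
there exists `u ∈ V` such that `M(‖G u‖²) a(u, v) = ⟨f (j u), j v⟩` for all `v ∈ V`. -/
theorem discrete_kirchhoff_existence
    {V H W : Type*}
    [NormedAddCommGroup V] [InnerProductSpace ℝ V] [FiniteDimensional ℝ V]
    [NormedAddCommGroup H] [InnerProductSpace ℝ H]
    [NormedAddCommGroup W] [InnerProductSpace ℝ W]
    (lam : ℝ) (hlam : 0 < lam)
    (j : V →ₗ[ℝ] H) (hj : ∀ v : V, ‖j v‖ ≤ (Real.sqrt lam)⁻¹ * ‖v‖)
    (G : V →ₗ[ℝ] W) (hG : ∀ v : V, ‖G v‖ ≤ ‖v‖)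
    (f : H → H) (κ : ℝ) (hκ : 0 ≤ κ)
    (hf : ∀ x y : H, ‖f x - f y‖ ≤ κ * ‖x - y‖)
    (m0 : ℝ) (hm0 : 0 < m0)
    (M : ℝ → ℝ) (hM : Continuous M) (hMge : ∀ s : ℝ, 0 ≤ s → m0 ≤ M s)
    (hcoef : 0 < m0 - κ / lam) :
    ∃ u : V, ∀ v : V, M (‖G u‖ ^ 2) * ⟪u, v⟫ = ⟪f (j u), j v⟫ := by
  have : CompleteSpace V := FiniteDimensional.complete ℝ V
  let T : V → V := fun u => (InnerProductSpace.toDual ℝ V).symm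
    ((innerSL ℝ (f (j u))).comp (LinearMap.toContinuousLinearMap j))
  have hTi : ∀ u v, ⟪T u, v⟫ = ⟪f (j u), j v⟫ := fun u v => by simp [T]
  have hT : ∀ x y, ‖T x - T y‖ ≤ κ / lam * ‖x - y‖ := by
    intro x y
    set d := T x - T y with hd
    rcases (norm_nonneg d).eq_or_lt with h0 | h0
    · rw [← h0]; positivity
    refine le_of_mul_le_mul_right ?_ h0
    calc ‖d‖ * ‖d‖ = ⟪d, d⟫ := (real_inner_self_eq_norm_mul_norm d).symm
      _ = ⟪f (j x) - f (j y), j d⟫ := by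
        conv_lhs => rw [hd, inner_sub_left, ← hd, hTi, hTi]
        rw [inner_sub_left]
      _ ≤ ‖f (j x) - f (j y)‖ * ‖j d‖ := real_inner_le_norm _ _
      _ ≤ (κ * ((Real.sqrt lam)⁻¹ * ‖x - y‖)) * ((Real.sqrt lam)⁻¹ * ‖d‖) := by
        have h1 := hj (x - y)
        rw [map_sub] at h1
        gcongr
        · exact (hf _ _).trans (by gcongr)
        · exact hj d
      _ = κ * ((Real.sqrt lam)⁻¹ * (Real.sqrt lam)⁻¹) * ‖x - y‖ * ‖d‖ := by ring
      _ = κ / lam * ‖x - y‖ * ‖d‖ := by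
        rw [← mul_inv, Real.mul_self_sqrt hlam.le, div_eq_mul_inv]
  have hGc : Continuous G := G.continuous_of_finiteDimensional
  obtain ⟨u, hu⟩ := exists_nonlocal_smul_eq (by positivity) hT (sub_pos.1 hcoef) hM hMge
    (Φ := fun u => ‖G u‖ ^ 2) (by fun_prop) (fun u => by positivity)
    (fun u => pow_le_pow_left₀ (norm_nonneg _) (hG u) 2)
  refine ⟨u, fun v => ?_⟩
  rw [← hTi, ← hu, real_inner_smul_left]
end

section
/- In the abstract discrete Kirchhoff setting, every u ∈ V satisfying M(‖G u‖²) a(u, v) = ⟨f(j u), j v⟩ for all v ∈ V obeys the a priori bound ‖u‖_a ≤ R₁, where R₁ = ‖f 0‖ / (λ^(1/2) (m0 − κ/λ)). -/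
/-!
Test the equation with `v = u`. The lower bound on `M`, Cauchy–Schwarz and the growth bound
`‖f y‖ ≤ ‖f 0‖ + κ ‖y‖` give `m0 ‖u‖² ≤ (‖f 0‖ + κ ‖j u‖) ‖j u‖`. Since `‖j u‖ ≤ λ^(-1/2) ‖u‖`,
the `κ`-term is at most `(κ/λ) ‖u‖²` and is absorbed on the left because `m0 - κ/λ > 0`;
dividing by `‖u‖` yields the bound.
-/

open RealInnerProductSpace

/-- A priori bound for solutions of the abstract discrete Kirchhoff problem:
any solution `u` satisfies `‖u‖_a ≤ R₁ = ‖f 0‖ / (λ^(1/2) (m0 − κ/λ))`. -/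
theorem discrete_kirchhoff_apriori_bound
    {V H W : Type*}
    [NormedAddCommGroup V] [InnerProductSpace ℝ V] [FiniteDimensional ℝ V]
    [NormedAddCommGroup H] [InnerProductSpace ℝ H]
    [NormedAddCommGroup W] [InnerProductSpace ℝ W]
    (lam : ℝ) (hlam : 0 < lam)
    (j : V →ₗ[ℝ] H) (hj : ∀ v : V, ‖j v‖ ≤ (Real.sqrt lam)⁻¹ * ‖v‖)
    (G : V →ₗ[ℝ] W) (hG : ∀ v : V, ‖G v‖ ≤ ‖v‖)
    (f : H → H) (κ : ℝ) (hκ : 0 ≤ κ)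
    (hf : ∀ x y : H, ‖f x - f y‖ ≤ κ * ‖x - y‖)
    (m0 : ℝ) (hm0 : 0 < m0)
    (M : ℝ → ℝ) (hM : Continuous M) (hMge : ∀ s : ℝ, 0 ≤ s → m0 ≤ M s)
    (hcoef : 0 < m0 - κ / lam)
    (u : V) (hu : ∀ v : V, M (‖G u‖ ^ 2) * ⟪u, v⟫ = ⟪f (j u), j v⟫) :
    ‖u‖ ≤ ‖f 0‖ / (Real.sqrt lam * (m0 - κ / lam)) := by
  have hs : 0 < √lam := Real.sqrt_pos.2 hlam
  have hinv : (√lam)⁻¹ * (√lam)⁻¹ = lam⁻¹ := by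
    rw [← mul_inv, Real.mul_self_sqrt hlam.le]
  have hgrowth : ‖f (j u)‖ ≤ ‖f 0‖ + κ * ‖j u‖ := by
    have h := hf (j u) 0
    rw [sub_zero] at h
    linarith [norm_sub_norm_le (f (j u)) (f 0)]
  have henergy : m0 * ‖u‖ ^ 2 ≤ ‖f (j u)‖ * ‖j u‖ := by
    have h := hu u
    rw [real_inner_self_eq_norm_sq] at h
    calc m0 * ‖u‖ ^ 2 ≤ M (‖G u‖ ^ 2) * ‖u‖ ^ 2 := by
          gcongr
          exact hMge _ (sq_nonneg _)
      _ ≤ ‖f (j u)‖ * ‖j u‖ := h ▸ real_inner_le_norm _ _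
  have hrhs : ‖f (j u)‖ * ‖j u‖ ≤ ‖f 0‖ * (√lam)⁻¹ * ‖u‖ + κ / lam * ‖u‖ ^ 2 := by
    calc ‖f (j u)‖ * ‖j u‖ ≤ (‖f 0‖ + κ * ‖j u‖) * ‖j u‖ := by gcongr
      _ ≤ (‖f 0‖ + κ * ((√lam)⁻¹ * ‖u‖)) * ((√lam)⁻¹ * ‖u‖) := by
          gcongr <;> exact hj u
      _ = ‖f 0‖ * (√lam)⁻¹ * ‖u‖ + κ / lam * ‖u‖ ^ 2 := by
          rw [div_eq_mul_inv κ lam, ← hinv]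
          ring
  rcases (norm_nonneg u).eq_or_lt with h0 | hpos
  · rw [← h0]
    positivity
  · have hlin : (m0 - κ / lam) * ‖u‖ ≤ ‖f 0‖ * (√lam)⁻¹ :=
      le_of_mul_le_mul_right (by linarith) hpos
    rw [← div_eq_mul_inv, le_div_iff₀ hs] at hlin
    rw [le_div_iff₀ (mul_pos hs hcoef)]
    linarith
end

section
/- In the abstract discrete Kirchhoff setting, assume additionally that M is Lipschitz continuous on the interval [0, R₁²] with Lipschitz constant L_M and that m0 − κ/λ − 2 L_M R₁² > 0. Then the discrete Kirchhoff problem has at most one solution: if u₁, u₂ ∈ V both satisfy M(‖G uᵢ‖²) a(uᵢ, v) = ⟨f(j uᵢ), j v⟩ for all v ∈ V and ‖u₁‖_a ≤ R₁, ‖u₂‖_a ≤ R₁, then u₁ = u₂. -/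
open RealInnerProductSpace

/-!
With `w = u₁ - u₂` and `sᵢ = ‖G uᵢ‖²`, testing both equations with `w` and subtracting gives
`M s₁ ‖w‖² = ⟪f (j u₁) - f (j u₂), j w⟫ + (M s₂ - M s₁) ⟪u₂, w⟫`.
The left side is at least `m0 ‖w‖²`. On the right, the first term is at most `κ / λ ‖w‖²`
(`inner_sub_le_of_lipschitz`), and the second is at most `2 L_M R₁² ‖w‖²`, since
`|s₂ - s₁| ≤ 2 R₁ ‖w‖` (`abs_normSq_sub_le`) and `|⟪u₂, w⟫| ≤ R₁ ‖w‖`. The smallness condition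
then forces `w = 0`.
-/

theorem inner_sub_le_of_lipschitz
    {V H : Type*} [NormedAddCommGroup V] [InnerProductSpace ℝ V]
    [NormedAddCommGroup H] [InnerProductSpace ℝ H]
    {lam : ℝ} (hlam : 0 < lam)
    (j : V →ₗ[ℝ] H) (hj : ∀ v : V, ‖j v‖ ≤ (Real.sqrt lam)⁻¹ * ‖v‖)
    {f : H → H} {κ : ℝ} (hκ : 0 ≤ κ) (hf : ∀ x y : H, ‖f x - f y‖ ≤ κ * ‖x - y‖) (u v : V) :
    ⟪f (j u) - f (j v), j (u - v)⟫ ≤ κ / lam * ‖u - v‖ ^ 2 := by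
  have hlip : ‖f (j u) - f (j v)‖ ≤ κ * ‖j (u - v)‖ := by
    simpa only [map_sub] using hf (j u) (j v)
  calc ⟪f (j u) - f (j v), j (u - v)⟫
      ≤ ‖f (j u) - f (j v)‖ * ‖j (u - v)‖ := real_inner_le_norm _ _
    _ ≤ κ * ‖j (u - v)‖ * ‖j (u - v)‖ := by gcongr
    _ = κ * ‖j (u - v)‖ ^ 2 := by ring
    _ ≤ κ * ((Real.sqrt lam)⁻¹ * ‖u - v‖) ^ 2 := by gcongr; exact hj _
    _ = κ / lam * ‖u - v‖ ^ 2 := by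
      rw [mul_pow, inv_pow, Real.sq_sqrt hlam.le]; ring

theorem abs_normSq_sub_le
    {V W : Type*} [NormedAddCommGroup V] [InnerProductSpace ℝ V]
    [NormedAddCommGroup W] [InnerProductSpace ℝ W]
    (G : V →ₗ[ℝ] W) (hG : ∀ v : V, ‖G v‖ ≤ ‖v‖) {R : ℝ} {u v : V}
    (hu : ‖u‖ ≤ R) (hv : ‖v‖ ≤ R) :
    |‖G v‖ ^ 2 - ‖G u‖ ^ 2| ≤ 2 * R * ‖u - v‖ := by
  have hdiff : |‖G v‖ - ‖G u‖| ≤ ‖u - v‖ := by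
    rw [abs_sub_comm]
    refine (abs_norm_sub_norm_le _ _).trans ?_
    rw [← map_sub]
    exact hG _
  have hsum : |‖G v‖ + ‖G u‖| ≤ 2 * R := by
    rw [abs_of_nonneg (by positivity)]
    linarith [hG u, hG v]
  rw [sq_sub_sq, abs_mul]
  exact mul_le_mul hsum hdiff (abs_nonneg _) ((abs_nonneg _).trans hsum)

/-- Uniqueness for the abstract discrete Kirchhoff problem: if `M` is Lipschitz with constant
`L_M` on `[0, R₁²]` and `m0 − κ/λ − 2 L_M R₁² > 0`, then there is at most one solution with
norm at most `R₁`. -/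
theorem discrete_kirchhoff_uniqueness
    {V H W : Type*}
    [NormedAddCommGroup V] [InnerProductSpace ℝ V] [FiniteDimensional ℝ V]
    [NormedAddCommGroup H] [InnerProductSpace ℝ H]
    [NormedAddCommGroup W] [InnerProductSpace ℝ W]
    (lam : ℝ) (hlam : 0 < lam)
    (j : V →ₗ[ℝ] H) (hj : ∀ v : V, ‖j v‖ ≤ (Real.sqrt lam)⁻¹ * ‖v‖)
    (G : V →ₗ[ℝ] W) (hG : ∀ v : V, ‖G v‖ ≤ ‖v‖)
    (f : H → H) (κ : ℝ) (hκ : 0 ≤ κ)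
    (hf : ∀ x y : H, ‖f x - f y‖ ≤ κ * ‖x - y‖)
    (m0 : ℝ) (hm0 : 0 < m0)
    (M : ℝ → ℝ) (hM : Continuous M) (hMge : ∀ s : ℝ, 0 ≤ s → m0 ≤ M s)
    (hcoef : 0 < m0 - κ / lam)
    (R₁ : ℝ) (hR₁ : R₁ = ‖f 0‖ / (Real.sqrt lam * (m0 - κ / lam)))
    (L_M : ℝ) (hLM0 : 0 ≤ L_M)
    (hMLip : ∀ s ∈ Set.Icc (0 : ℝ) (R₁ ^ 2), ∀ t ∈ Set.Icc (0 : ℝ) (R₁ ^ 2),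
      |M s - M t| ≤ L_M * |s - t|)
    (hsmall : 0 < m0 - κ / lam - 2 * L_M * R₁ ^ 2)
    (u₁ u₂ : V)
    (hu₁ : ∀ v : V, M (‖G u₁‖ ^ 2) * ⟪u₁, v⟫ = ⟪f (j u₁), j v⟫)
    (hu₂ : ∀ v : V, M (‖G u₂‖ ^ 2) * ⟪u₂, v⟫ = ⟪f (j u₂), j v⟫)
    (hb₁ : ‖u₁‖ ≤ R₁) (hb₂ : ‖u₂‖ ≤ R₁) :
    u₁ = u₂ := by
  have hR0 : 0 ≤ R₁ := (norm_nonneg _).trans hb₁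
  have hmem : ∀ u : V, ‖u‖ ≤ R₁ → ‖G u‖ ^ 2 ∈ Set.Icc (0 : ℝ) (R₁ ^ 2) := fun u hu =>
    ⟨by positivity, pow_le_pow_left₀ (norm_nonneg _) ((hG u).trans hu) 2⟩
  have hid : M (‖G u₁‖ ^ 2) * ‖u₁ - u₂‖ ^ 2 = ⟪f (j u₁) - f (j u₂), j (u₁ - u₂)⟫
      + (M (‖G u₂‖ ^ 2) - M (‖G u₁‖ ^ 2)) * ⟪u₂, u₁ - u₂⟫ := by
    have hw : ‖u₁ - u₂‖ ^ 2 = ⟪u₁, u₁ - u₂⟫ - ⟪u₂, u₁ - u₂⟫ := by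
      rw [← inner_sub_left, real_inner_self_eq_norm_sq]
    rw [inner_sub_left, ← hu₁, ← hu₂, hw]
    ring
  have hlow : m0 * ‖u₁ - u₂‖ ^ 2 ≤ M (‖G u₁‖ ^ 2) * ‖u₁ - u₂‖ ^ 2 := by
    gcongr
    exact hMge _ (by positivity)
  have hM2 : |M (‖G u₂‖ ^ 2) - M (‖G u₁‖ ^ 2)| ≤ L_M * (2 * R₁ * ‖u₁ - u₂‖) :=
    (hMLip _ (hmem u₂ hb₂) _ (hmem u₁ hb₁)).trans
      (mul_le_mul_of_nonneg_left (abs_normSq_sub_le G hG hb₁ hb₂) hLM0)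
  have hin : |⟪u₂, u₁ - u₂⟫| ≤ R₁ * ‖u₁ - u₂‖ :=
    (abs_real_inner_le_norm _ _).trans (by gcongr)
  have hcross : (M (‖G u₂‖ ^ 2) - M (‖G u₁‖ ^ 2)) * ⟪u₂, u₁ - u₂⟫
      ≤ 2 * L_M * R₁ ^ 2 * ‖u₁ - u₂‖ ^ 2 := by
    refine (le_abs_self _).trans ?_
    rw [abs_mul]
    refine (mul_le_mul hM2 hin (abs_nonneg _) (by positivity)).trans (le_of_eq ?_)
    ring
  have hmain : (m0 - κ / lam - 2 * L_M * R₁ ^ 2) * ‖u₁ - u₂‖ ^ 2 ≤ 0 := by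
    linarith [inner_sub_le_of_lipschitz hlam j hj hκ hf u₁ u₂]
  have hzero : ‖u₁ - u₂‖ ^ 2 ≤ 0 := nonpos_of_mul_nonpos_right hmain hsmall
  have hnorm : ‖u₁ - u₂‖ = 0 := pow_eq_zero_iff two_ne_zero |>.mp (hzero.antisymm (sq_nonneg _))
  exact sub_eq_zero.mp (norm_eq_zero.mp hnorm)
end

section
/- In the abstract discrete Kirchhoff setting, fix w ∈ V and let R(w) ∈ V be the unique element (given by the Riesz representation in (V, a(·,·))) satisfying a(R(w), v) = M(‖G w‖²) a(w, v) − ⟨f(j w), j v⟩ for all v ∈ V. Then a(R(w), w) ≥ (m0 − κ/λ) ‖w‖_a² − λ^(−1/2) ‖f 0‖ ‖w‖_a. -/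
/-!
Testing the residual identity with `v = w` gives
`a(R(w), w) = M(‖G w‖²) ‖w‖² - ⟨f (j w), j w⟩`. The first term is at least `m0 ‖w‖²`. For the
second, Cauchy–Schwarz and the Lipschitz growth bound `‖f y‖ ≤ κ ‖y‖ + ‖f 0‖` at `y = j w`, followed
by `‖j w‖ ≤ λ^(-1/2) ‖w‖`, bound it by `(κ / λ) ‖w‖² + λ^(-1/2) ‖f 0‖ ‖w‖`.
-/

open RealInnerProductSpace

/-- Coercivity-type lower bound for the Riesz representative `R(w)` of the residual of the
abstract discrete Kirchhoff problem:
`a(R(w), w) ≥ (m0 − κ/λ) ‖w‖_a² − λ^(−1/2) ‖f 0‖ ‖w‖_a`. -/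
theorem discrete_kirchhoff_residual_positivity
    {V H W : Type*}
    [NormedAddCommGroup V] [InnerProductSpace ℝ V] [FiniteDimensional ℝ V]
    [NormedAddCommGroup H] [InnerProductSpace ℝ H]
    [NormedAddCommGroup W] [InnerProductSpace ℝ W]
    (lam : ℝ) (hlam : 0 < lam)
    (j : V →ₗ[ℝ] H) (hj : ∀ v : V, ‖j v‖ ≤ (Real.sqrt lam)⁻¹ * ‖v‖)
    (G : V →ₗ[ℝ] W) (hG : ∀ v : V, ‖G v‖ ≤ ‖v‖)
    (f : H → H) (κ : ℝ) (hκ : 0 ≤ κ)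
    (hf : ∀ x y : H, ‖f x - f y‖ ≤ κ * ‖x - y‖)
    (m0 : ℝ) (hm0 : 0 < m0)
    (M : ℝ → ℝ) (hM : Continuous M) (hMge : ∀ s : ℝ, 0 ≤ s → m0 ≤ M s)
    (hcoef : 0 < m0 - κ / lam)
    (w Rw : V)
    (hRw : ∀ v : V, ⟪Rw, v⟫ = M (‖G w‖ ^ 2) * ⟪w, v⟫ - ⟪f (j w), j v⟫) :
    (m0 - κ / lam) * ‖w‖ ^ 2 - (Real.sqrt lam)⁻¹ * ‖f 0‖ * ‖w‖ ≤ ⟪Rw, w⟫ := by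
  have hs : (Real.sqrt lam)⁻¹ ^ 2 = lam⁻¹ := by
    rw [inv_pow, Real.sq_sqrt hlam.le]
  have hgrowth : ‖f (j w)‖ ≤ κ * ‖j w‖ + ‖f 0‖ := by
    have h := hf (j w) 0
    rw [sub_zero] at h
    linarith [norm_sub_norm_le (f (j w)) (f 0)]
  have hforce : ⟪f (j w), j w⟫ ≤ κ / lam * ‖w‖ ^ 2 + (Real.sqrt lam)⁻¹ * ‖f 0‖ * ‖w‖ :=
    calc ⟪f (j w), j w⟫ ≤ ‖f (j w)‖ * ‖j w‖ := real_inner_le_norm _ _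
      _ ≤ (κ * ‖j w‖ + ‖f 0‖) * ‖j w‖ := by gcongr
      _ ≤ (κ * ((Real.sqrt lam)⁻¹ * ‖w‖) + ‖f 0‖) * ((Real.sqrt lam)⁻¹ * ‖w‖) := by
        gcongr <;> exact hj w
      _ = κ * (Real.sqrt lam)⁻¹ ^ 2 * ‖w‖ ^ 2 + (Real.sqrt lam)⁻¹ * ‖f 0‖ * ‖w‖ := by ring
      _ = κ / lam * ‖w‖ ^ 2 + (Real.sqrt lam)⁻¹ * ‖f 0‖ * ‖w‖ := by
        rw [hs, div_eq_mul_inv]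
  have hM_ge : m0 * ‖w‖ ^ 2 ≤ M (‖G w‖ ^ 2) * ‖w‖ ^ 2 :=
    mul_le_mul_of_nonneg_right (hMge _ (sq_nonneg _)) (sq_nonneg _)
  rw [hRw w, real_inner_self_eq_norm_sq]
  linarith
end

section
/- Abstract error estimate for the discrete Kirchhoff problem: in the abstract discrete Kirchhoff setting, let u_h ∈ V satisfy M(‖G u_h‖²) a(u_h, v) = ⟨f(j u_h), j v⟩ for all v ∈ V with ‖u_h‖_a ≤ R_h for some R_h ≥ 0. Let w ∈ V, D ≥ 0, F ∈ H, E ≥ 0, δ ≥ 0, η ≥ 0, R' ≥ 0 and a linear functional ε : V → ℝ be such that: (i) M(D) a(w, v) = ⟨F, j v⟩ + ε(v) for all v ∈ V; (ii) |ε(v)| ≤ E ‖v‖_a for all v ∈ V; (iii) ‖F − f(j w)‖ ≤ κ δ; (iv) ‖G w‖ ≤ R' and |‖G w‖² − D| ≤ η; (v) M is Lipschitz continuous with constant L_M on an interval [0, S] containing ‖G u_h‖², ‖G w‖² and D. If m0 − κ/λ − L_M (R_h + R') R_h > 0, then (m0 − κ/λ − L_M (R_h + R') R_h) ‖w − u_h‖_a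 ≤ E + κ λ^(−1/2) δ + L_M R_h η. -/
/-!
The proof is an energy argument. Put `e = w - u_h`, and test both equations with `e`:
`M(D) ‖e‖² = ⟪F - f (j w), j e⟫ + ⟪f (j w) - f (j u_h), j e⟫ + ε e + (M(‖G u_h‖²) - M(D)) ⟪u_h, e⟫`.
The left side is at least `m0 ‖e‖²`. By Cauchy–Schwarz, the first three terms on the right are
at most `κ δ λ^(-1/2) ‖e‖`, `(κ/λ) ‖e‖²` and `E ‖e‖`. For the nonlocal term, passing through
`‖G w‖²` and factoring the difference of squares gives
`|‖G u_h‖² - D| ≤ (R_h + R') ‖e‖ + η`. Absorbing the quadratic terms on the left and dividing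
by `‖e‖` yields the estimate.
-/

open RealInnerProductSpace

/-- Abstract error estimate for the discrete Kirchhoff problem (Theorem 5.1 of the paper):
if `u_h` solves the discrete problem with `‖u_h‖_a ≤ R_h`, and `w` satisfies a perturbed
equation with consistency error `ε` bounded by `E`, data error `δ`, nonlocal-argument error
`η`, and `M` is Lipschitz with constant `L_M` on an interval `[0, S]` containing
`‖G u_h‖²`, `‖G w‖²` and `D`, then
`(m0 − κ/λ − L_M (R_h + R') R_h) ‖w − u_h‖_a ≤ E + κ λ^(−1/2) δ + L_M R_h η`. -/
theorem discrete_kirchhoff_error_estimate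
    {V H W : Type*}
    [NormedAddCommGroup V] [InnerProductSpace ℝ V] [FiniteDimensional ℝ V]
    [NormedAddCommGroup H] [InnerProductSpace ℝ H]
    [NormedAddCommGroup W] [InnerProductSpace ℝ W]
    (lam : ℝ) (hlam : 0 < lam)
    (j : V →ₗ[ℝ] H) (hj : ∀ v : V, ‖j v‖ ≤ (Real.sqrt lam)⁻¹ * ‖v‖)
    (G : V →ₗ[ℝ] W) (hG : ∀ v : V, ‖G v‖ ≤ ‖v‖)
    (f : H → H) (κ : ℝ) (hκ : 0 ≤ κ)
    (hf : ∀ x y : H, ‖f x - f y‖ ≤ κ * ‖x - y‖)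
    (m0 : ℝ) (hm0 : 0 < m0)
    (M : ℝ → ℝ) (hM : Continuous M) (hMge : ∀ s : ℝ, 0 ≤ s → m0 ≤ M s)
    (hcoef : 0 < m0 - κ / lam)
    (u_h : V)
    (hsol : ∀ v : V, M (‖G u_h‖ ^ 2) * ⟪u_h, v⟫ = ⟪f (j u_h), j v⟫)
    (R_h : ℝ) (hRh0 : 0 ≤ R_h) (huh : ‖u_h‖ ≤ R_h)
    (w : V) (D : ℝ) (hD : 0 ≤ D) (F : H)
    (E : ℝ) (hE : 0 ≤ E) (δ : ℝ) (hδ : 0 ≤ δ) (η : ℝ) (hη : 0 ≤ η)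
    (R' : ℝ) (hR' : 0 ≤ R')
    (ε : V →ₗ[ℝ] ℝ)
    (hi : ∀ v : V, M D * ⟪w, v⟫ = ⟪F, j v⟫ + ε v)
    (hii : ∀ v : V, |ε v| ≤ E * ‖v‖)
    (hiii : ‖F - f (j w)‖ ≤ κ * δ)
    (hiv₁ : ‖G w‖ ≤ R') (hiv₂ : |‖G w‖ ^ 2 - D| ≤ η)
    (L_M : ℝ) (hLM0 : 0 ≤ L_M) (S : ℝ)
    (hS₁ : ‖G u_h‖ ^ 2 ∈ Set.Icc (0 : ℝ) S)
    (hS₂ : ‖G w‖ ^ 2 ∈ Set.Icc (0 : ℝ) S)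
    (hS₃ : D ∈ Set.Icc (0 : ℝ) S)
    (hMLip : ∀ s ∈ Set.Icc (0 : ℝ) S, ∀ t ∈ Set.Icc (0 : ℝ) S,
      |M s - M t| ≤ L_M * |s - t|)
    (hpos : 0 < m0 - κ / lam - L_M * (R_h + R') * R_h) :
    (m0 - κ / lam - L_M * (R_h + R') * R_h) * ‖w - u_h‖ ≤
      E + κ * (Real.sqrt lam)⁻¹ * δ + L_M * R_h * η := by
  set e : V := w - u_h with he
  set c : ℝ := (Real.sqrt lam)⁻¹ with hc
  have hc0 : 0 ≤ c := by positivity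
  have hcc : c * c = 1 / lam := by
    rw [hc, ← mul_inv, Real.mul_self_sqrt hlam.le, one_div]
  have hje : ‖j e‖ ≤ c * ‖e‖ := hj e
  have hee : ⟪w, e⟫ - ⟪u_h, e⟫ = ‖e‖ ^ 2 := by
    rw [← inner_sub_left, ← he, real_inner_self_eq_norm_sq]
  have hkey : M D * ‖e‖ ^ 2 = ⟪F - f (j w), j e⟫ + ⟪f (j w) - f (j u_h), j e⟫ + ε e
      + (M (‖G u_h‖ ^ 2) - M D) * ⟪u_h, e⟫ := by
    rw [← hee, inner_sub_left, inner_sub_left]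
    linear_combination hi e - hsol e
  have h0 : m0 * ‖e‖ ^ 2 ≤ M D * ‖e‖ ^ 2 :=
    mul_le_mul_of_nonneg_right (hMge D hD) (sq_nonneg _)
  have h1 : ⟪F - f (j w), j e⟫ ≤ κ * δ * (c * ‖e‖) :=
    (real_inner_le_norm _ _).trans
      (mul_le_mul hiii hje (norm_nonneg _) (mul_nonneg hκ hδ))
  have h2 : ⟪f (j w) - f (j u_h), j e⟫ ≤ κ / lam * ‖e‖ ^ 2 := by
    have hfe : ‖f (j w) - f (j u_h)‖ ≤ κ * (c * ‖e‖) := by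
      refine (hf _ _).trans ?_
      rw [← map_sub]
      exact mul_le_mul_of_nonneg_left hje hκ
    calc ⟪f (j w) - f (j u_h), j e⟫ ≤ κ * (c * ‖e‖) * (c * ‖e‖) :=
          (real_inner_le_norm _ _).trans
            (mul_le_mul hfe hje (norm_nonneg _) (by positivity))
      _ = κ / lam * ‖e‖ ^ 2 := by linear_combination κ * ‖e‖ ^ 2 * hcc
  have h3 : ε e ≤ E * ‖e‖ := (le_abs_self _).trans (hii e)
  have hsq : |‖G u_h‖ ^ 2 - ‖G w‖ ^ 2| ≤ (R_h + R') * ‖e‖ := by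
    have hd : |‖G u_h‖ - ‖G w‖| ≤ ‖e‖ := by
      rw [abs_sub_comm]
      refine (abs_norm_sub_norm_le _ _).trans ?_
      rw [← map_sub]
      exact hG e
    rw [sq_sub_sq, abs_mul, abs_of_nonneg (by positivity : 0 ≤ ‖G u_h‖ + ‖G w‖)]
    exact mul_le_mul (add_le_add ((hG u_h).trans huh) hiv₁) hd (abs_nonneg _) (by positivity)
  have hMd : |M (‖G u_h‖ ^ 2) - M D| ≤ L_M * ((R_h + R') * ‖e‖ + η) :=
    (hMLip _ hS₁ _ hS₃).trans (mul_le_mul_of_nonneg_left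
      ((abs_sub_le _ (‖G w‖ ^ 2) _).trans (add_le_add hsq hiv₂)) hLM0)
  have h4 : (M (‖G u_h‖ ^ 2) - M D) * ⟪u_h, e⟫
      ≤ L_M * ((R_h + R') * ‖e‖ + η) * (R_h * ‖e‖) := by
    refine (le_abs_self _).trans ?_
    rw [abs_mul]
    exact mul_le_mul hMd ((abs_real_inner_le_norm _ _).trans
      (mul_le_mul_of_nonneg_right huh (norm_nonneg _))) (abs_nonneg _) (by positivity)
  rcases (norm_nonneg e).eq_or_lt with hz | hz
  · rw [← hz, mul_zero]
    positivity
  · refine le_of_mul_le_mul_right ?_ hz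
    linarith only [hkey, h0, h1, h2, h3, h4]
end
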